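/- arXiv:1801.04991 — 2 statements merged into one kernel-verified Lean document; each statement's English description precedes it below -/
import Mathlib

section
/- Leafication does not increase delay: Let (W,A,μ) be a schedule and let y ∈ W∖{r} be a vertex of out-degree 1, with incident arcs (x,y),(y,z) ∈ A. Let y' ∉ W be a new vertex and define the schedule (W',A',μ') by W' := W ∪ {y'}, A' := (A ∖ {(x,y),(y,z)}) ∪ {(x,y'),(y',y),(y',z)}, μ'(u) := μ(u) for u ∈ W and μ'(y') := μ(y). Then (W',A',μ') is a schedule and delay(W',A',μ') ≤ delay(W,A,μ). -/
/-- A vehicle-routing instance: a finite set `P` of items, a root `r ∉ P`,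
a placement `μ₀` of root and items in a metric space `M`, a delivery time
`δ ≥ 1`, and a deadline `Δ > 0`. -/
structure VRInstance (α M : Type*) [MetricSpace M] where
  P : Finset α
  r : α
  r_not_item : r ∉ P
  P_nonempty : P.Nonempty
  μ₀ : α → M
  δ : ℝ
  one_le_δ : 1 ≤ δ
  Δ : ℝ
  Δ_pos : 0 < Δ

variable {α M : Type*} [MetricSpace M]

/-- A schedule: a finite arborescence `(W, A)` rooted at `I.r` with
`{r} ∪ P ⊆ W`, out-degree at most 2 everywhere, out-degree at most 1 on items,
together with a placement `μ : W → M` extending `μ₀` on `{r} ∪ P`. -/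
structure Schedule {α M : Type*} [MetricSpace M] (I : VRInstance α M) where
  W : Set α
  A : Set (α × α)
  μ : α → M
  finite_W : W.Finite
  root_mem : I.r ∈ W
  items_subset : ↑I.P ⊆ W
  arcs_subset : ∀ a ∈ A, a.1 ∈ W ∧ a.2 ∈ W
  no_arc_into_root : ∀ u, (u, I.r) ∉ A
  unique_in_arc : ∀ v ∈ W, v ≠ I.r → ∃! u, (u, v) ∈ A
  reachable : ∀ v ∈ W, Relation.ReflTransGen (fun u w => (u, w) ∈ A) I.r v
  outdeg_le_two : ∀ v ∈ W, {x | (v, x) ∈ A}.ncard ≤ 2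
  items_outdeg_le_one : ∀ p ∈ I.P, {x | (p, x) ∈ A}.ncard ≤ 1
  μ_placement : ∀ v ∈ insert I.r (↑I.P : Set α), μ v = I.μ₀ v

namespace Schedule

variable {I : VRInstance α M} (S : Schedule I)

/-- Reachability along arcs of the schedule. -/
def reach (u v : α) : Prop := Relation.ReflTransGen (fun a b => (a, b) ∈ S.A) u v

/-- `W_{x*}`: the vertex set of the maximal subarborescence rooted at `x`. -/
def desc (x : α) : Set α := {y ∈ S.W | S.reach x y}

/-- `W_{ry}`: the vertex set of the directed `r`–`y` path. -/
def pathSet (y : α) : Set α := {u ∈ S.W | S.reach I.r u ∧ S.reach u y}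

/-- The arcs on the directed `r`–`y` path. -/
def pathArcs (y : α) : Set (α × α) :=
  {a ∈ S.A | a.1 ∈ S.pathSet y ∧ a.2 ∈ S.pathSet y}

/-- Out-degree of a vertex. -/
noncomputable def outDeg (v : α) : ℕ := {x | (v, x) ∈ S.A}.ncard

/-- The handover delay at a bifurcation node `w`:
`min_{x child of w} |P ∩ W_{x*}|`. -/
noncomputable def handover (w : α) : ℕ :=
  sInf {k : ℕ | ∃ x, (w, x) ∈ S.A ∧ k = ((↑I.P : Set α) ∩ S.desc x).ncard}

/-- The delay of vertex `y`: travel time along the `r`–`y` path, plus delivery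
time `δ` for each item on the path, plus handover delays at bifurcation nodes
on the path. -/
noncomputable def delayTo (y : α) : ℝ :=
  (∑ᶠ a ∈ S.pathArcs y, dist (S.μ a.1) (S.μ a.2))
    + I.δ * ((↑I.P : Set α) ∩ S.pathSet y).ncard
    + ∑ᶠ w ∈ {u ∈ S.pathSet y | S.outDeg u = 2}, (S.handover w : ℝ)

/-- The delay of the schedule: the maximum delay of an item. -/
noncomputable def delay : ℝ := I.P.sup' I.P_nonempty fun p => S.delayTo p

/-- A schedule is feasible if its delay is at most the deadline. -/
def Feasible : Prop := S.delay ≤ I.Δ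

/-- The length (travel cost) of the schedule. -/
noncomputable def length : ℝ := ∑ᶠ a ∈ S.A, dist (S.μ a.1) (S.μ a.2)

/-- The leaves of the schedule (one vehicle per leaf). -/
def leaves : Set α := {v ∈ S.W | S.outDeg v = 0}

/-- The cost of the schedule for setup cost `σ`: length plus `σ` per vehicle. -/
noncomputable def cost (σ : ℝ) : ℝ := S.length + σ * S.leaves.ncard

end Schedule

/-- The minimum length of a tree with vertex set `{r} ∪ P`,
with edges weighted by the metric distance. -/
noncomputable def mstLength [DecidableEq α] (I : VRInstance α M) : ℝ :=
  sInf {x : ℝ | ∃ T : SimpleGraph ↥(insert I.r I.P), T.IsTree ∧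
    x = ∑ᶠ e ∈ T.edgeSet,
      (Sym2.lift ⟨fun u v => dist (I.μ₀ u) (I.μ₀ v), fun u v => dist_comm _ _⟩ : Sym2 ↥(insert I.r I.P) → ℝ) e}

/-!
Read the delay of a vertex recursively along its path: an arc `(u, v)` adds its length and the
delay charged to `v` itself. Leafication renames `y` to `y'` in the arborescence and hangs `y` as a
leaf below `y'`, at distance `0`. The handover at the new bifurcation node `y'` is at most
`|P ∩ {y}|`, hence at most the delivery time that was charged to `y` and is not charged to `y'`; by
induction along the old paths, no vertex gets a larger delay under the renaming. Only the new leaf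
`y` can become later, by the handover at `y'`. This is at most `1 ≤ δ`, and it is positive only if
some item lies strictly below `y`; the old delay of that item exceeds the old delay of `y` by at
least `δ`.
-/

open Equiv (swap)

namespace Schedule

variable {I : VRInstance α M} (S : Schedule I)

/-- Reachability along at least one arc, so that `S.strictReach u v` says that `v` lies strictly
below `u`. -/
def strictReach (u v : α) : Prop := Relation.TransGen (fun a b => (a, b) ∈ S.A) u v

theorem finite_children (v : α) : {c | (v, c) ∈ S.A}.Finite :=
  S.finite_W.subset fun _ hc => (S.arcs_subset _ hc).2

theorem arc_tail_unique {u v w : α} (hu : (u, w) ∈ S.A) (hv : (v, w) ∈ S.A) : u = v :=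
  (S.unique_in_arc w (S.arcs_subset _ hu).2
    (fun h => S.no_arc_into_root u (h ▸ hu))).unique hu hv

theorem reach_root_iff {v : α} : S.reach v I.r ↔ v = I.r := by
  refine ⟨fun h => ?_, fun h => h ▸ .refl⟩
  obtain h | ⟨u, -, hu⟩ := h.cases_tail
  · exact h.symm
  · exact absurd hu (S.no_arc_into_root u)

theorem reach_iff_of_arc {u v w : α} (huv : (u, v) ∈ S.A) :
    S.reach w v ↔ w = v ∨ S.reach w u := by
  refine ⟨fun h => ?_, ?_⟩
  · obtain h | ⟨t, hwt, htv⟩ := h.cases_tail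
    · exact .inl h.symm
    · exact .inr (S.arc_tail_unique htv huv ▸ hwt)
  · rintro (rfl | h)
    exacts [.refl, h.tail huv]

theorem not_strictReach_self {v : α} (hv : v ∈ S.W) : ¬ S.strictReach v v := by
  have hrv : S.reach I.r v := S.reachable v hv
  induction hrv with
  | refl =>
    intro h
    obtain ⟨u, -, hu⟩ := Relation.TransGen.tail'_iff.1 h
    exact S.no_arc_into_root u hu
  | @tail u w _ huw ih =>
    intro h
    obtain ⟨t, hwt, htw⟩ := Relation.TransGen.tail'_iff.1 h
    obtain rfl := S.arc_tail_unique htw huw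
    exact ih (S.arcs_subset _ huw).1 (.head' huw hwt)

theorem not_reach_of_arc {u v : α} (huv : (u, v) ∈ S.A) : ¬ S.reach v u :=
  fun h => S.not_strictReach_self (S.arcs_subset _ huv).1 (.head' huv h)

theorem mem_pathSet {v w : α} : w ∈ S.pathSet v ↔ w ∈ S.W ∧ S.reach w v :=
  ⟨fun h => ⟨h.1, h.2.2⟩, fun h => ⟨h.1, S.reachable w h.1, h.2⟩⟩

theorem mem_pathArcs {a b v : α} : (a, b) ∈ S.pathArcs v ↔ (a, b) ∈ S.A ∧ S.reach b v := by
  simp only [pathArcs, Set.mem_ofPred_eq, mem_pathSet]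
  refine ⟨fun h => ⟨h.1, h.2.2.2⟩, fun h => ?_⟩
  obtain ⟨ha, hb⟩ := S.arcs_subset _ h.1
  exact ⟨h.1, ⟨ha, .head h.1 h.2⟩, hb, h.2⟩

theorem finite_pathSet (v : α) : (S.pathSet v).Finite :=
  S.finite_W.subset fun _ h => h.1

theorem finite_pathArcs (v : α) : (S.pathArcs v).Finite :=
  (S.finite_W.prod S.finite_W).subset fun a h => S.arcs_subset a h.1

theorem pathSet_root : S.pathSet I.r = {I.r} := by
  ext w
  rw [mem_pathSet, reach_root_iff, Set.mem_singleton_iff, and_iff_right_iff_imp]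
  rintro rfl
  exact S.root_mem

theorem pathArcs_root : S.pathArcs I.r = ∅ := by
  refine Set.eq_empty_of_forall_notMem fun ⟨a, b⟩ h => ?_
  rw [mem_pathArcs, reach_root_iff] at h
  exact S.no_arc_into_root a (h.2 ▸ h.1)

theorem pathSet_of_arc {u v : α} (huv : (u, v) ∈ S.A) :
    S.pathSet v = insert v (S.pathSet u) := by
  ext w
  rw [Set.mem_insert_iff, mem_pathSet, mem_pathSet, S.reach_iff_of_arc huv, and_or_left,
    and_iff_right_of_imp (a := w ∈ S.W)]
  rintro rfl
  exact (S.arcs_subset _ huv).2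

theorem pathArcs_of_arc {u v : α} (huv : (u, v) ∈ S.A) :
    S.pathArcs v = insert (u, v) (S.pathArcs u) := by
  ext ⟨a, b⟩
  rw [Set.mem_insert_iff, mem_pathArcs, mem_pathArcs, S.reach_iff_of_arc huv, and_or_left,
    Prod.mk.injEq]
  refine or_congr_left ⟨fun ⟨hab, hb⟩ => ⟨?_, hb⟩, ?_⟩
  · exact S.arc_tail_unique (hb ▸ hab) huv
  · rintro ⟨rfl, rfl⟩
    exact ⟨huv, rfl⟩

/-- The delay charged to the vertex `v` itself: the delivery time of an item, and the handover delay
of a bifurcation node. -/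
noncomputable def nodeDelay (v : α) : ℝ :=
  (↑I.P : Set α).indicator (fun _ => I.δ) v +
    {w | S.outDeg w = 2}.indicator (fun w => (S.handover w : ℝ)) v

theorem delayTo_eq (v : α) :
    S.delayTo v = (∑ᶠ a ∈ S.pathArcs v, dist (S.μ a.1) (S.μ a.2)) +
      ∑ᶠ w ∈ S.pathSet v, S.nodeDelay w := by
  have hitems : ∑ᶠ w ∈ S.pathSet v, (↑I.P : Set α).indicator (fun _ => I.δ) w =
      I.δ * ((↑I.P : Set α) ∩ S.pathSet v).ncard := by
    rw [finsum_mem_def, Set.indicator_indicator, ← finsum_mem_def, Set.inter_comm, ← finsum_one,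
      Nat.cast_finsum_mem (I.P.finite_toSet.inter_of_left _), mul_finsum_mem]
    simp only [Nat.cast_one, mul_one]
  have hhandovers : ∑ᶠ w ∈ S.pathSet v,
      {w | S.outDeg w = 2}.indicator (fun w => (S.handover w : ℝ)) w =
        ∑ᶠ w ∈ {u ∈ S.pathSet v | S.outDeg u = 2}, (S.handover w : ℝ) := by
    rw [finsum_mem_def, Set.indicator_indicator, ← finsum_mem_def]
    rfl
  unfold nodeDelay
  rw [finsum_mem_add_distrib (S.finite_pathSet v), hitems, hhandovers, ← add_assoc]
  rfl

theorem delayTo_root : S.delayTo I.r = S.nodeDelay I.r := by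
  rw [delayTo_eq, pathArcs_root, pathSet_root, finsum_mem_empty, finsum_mem_singleton, zero_add]

theorem delayTo_of_arc {u v : α} (huv : (u, v) ∈ S.A) :
    S.delayTo v = S.delayTo u + dist (S.μ u) (S.μ v) + S.nodeDelay v := by
  have hv : v ∉ S.pathSet u := fun h => S.not_reach_of_arc huv h.2.2
  have huv' : (u, v) ∉ S.pathArcs u := fun h => hv h.2.2
  rw [delayTo_eq, delayTo_eq, S.pathArcs_of_arc huv, S.pathSet_of_arc huv,
    finsum_mem_insert _ huv' (S.finite_pathArcs u), finsum_mem_insert _ hv (S.finite_pathSet u)]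
  ring

theorem indicator_items_le_nodeDelay (v : α) :
    (↑I.P : Set α).indicator (fun _ => I.δ) v ≤ S.nodeDelay v :=
  le_add_of_nonneg_right (Set.indicator_nonneg (fun _ _ => Nat.cast_nonneg _) v)

theorem nodeDelay_of_outDeg_ne_two {v : α} (hv : S.outDeg v ≠ 2) :
    S.nodeDelay v = (↑I.P : Set α).indicator (fun _ => I.δ) v := by
  rw [nodeDelay, Set.indicator_of_notMem (s := {w | S.outDeg w = 2}) hv, add_zero]

theorem delayTo_add_nodeDelay_le {u v : α} (huv : (u, v) ∈ S.A) :
    S.delayTo u + S.nodeDelay v ≤ S.delayTo v := by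
  rw [S.delayTo_of_arc huv]
  gcongr
  exact le_add_of_nonneg_right dist_nonneg

theorem delayTo_le_of_reach {u v : α} (huv : S.reach u v) : S.delayTo u ≤ S.delayTo v := by
  induction huv with
  | refl => rfl
  | @tail b c _ hbc ih =>
    have hδ : 0 ≤ I.δ := zero_le_one.trans I.one_le_δ
    have hc : 0 ≤ S.nodeDelay c :=
      (Set.indicator_nonneg (fun _ _ => hδ) c).trans (S.indicator_items_le_nodeDelay c)
    linarith [S.delayTo_add_nodeDelay_le hbc]

theorem delayTo_add_le_of_strictReach {u q : α} (huq : S.strictReach u q) (hq : q ∈ I.P) :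
    S.delayTo u + I.δ ≤ S.delayTo q := by
  obtain ⟨t, hut, htq⟩ := Relation.TransGen.tail'_iff.1 huq
  have hδ : I.δ ≤ S.nodeDelay q := by
    simpa only [Set.indicator_of_mem (Finset.mem_coe.2 hq)]
      using S.indicator_items_le_nodeDelay q
  linarith [S.delayTo_le_of_reach hut, S.delayTo_add_nodeDelay_le htq]

theorem handover_le {v c : α} (hvc : (v, c) ∈ S.A) :
    S.handover v ≤ ((↑I.P : Set α) ∩ S.desc c).ncard :=
  Nat.sInf_le ⟨c, hvc, rfl⟩

theorem exists_handover_eq {v : α} (hv : S.outDeg v ≠ 0) :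
    ∃ c, (v, c) ∈ S.A ∧ S.handover v = ((↑I.P : Set α) ∩ S.desc c).ncard := by
  obtain ⟨c, hc⟩ : {c | (v, c) ∈ S.A}.Nonempty := Set.nonempty_of_ncard_ne_zero hv
  exact Nat.sInf_mem (s := {k | ∃ c, (v, c) ∈ S.A ∧ k = ((↑I.P : Set α) ∩ S.desc c).ncard})
    ⟨_, c, hc, rfl⟩

theorem exists_item_strictReach {v : α} (hv : S.outDeg v ≠ 0) (hpos : 0 < S.handover v) :
    ∃ q ∈ I.P, S.strictReach v q := by
  obtain ⟨c, hvc, hc⟩ := S.exists_handover_eq hv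
  obtain ⟨q, hq, -, hcq⟩ := Set.nonempty_of_ncard_ne_zero (hc ▸ hpos).ne'
  exact ⟨q, hq, .head' hvc hcq⟩

theorem delayTo_le_delay {p : α} (hp : p ∈ I.P) : S.delayTo p ≤ S.delay :=
  Finset.le_sup' S.delayTo hp

/-- The vertex `y` can be turned into a leaf hanging off the new vertex `y'`. -/
structure Leafifiable (y y' : α) : Prop where
  mem : y ∈ S.W
  ne_root : y ≠ I.r
  outDeg_eq : S.outDeg y = 1
  fresh : y' ∉ S.W

variable {S} {y y' : α}

namespace Leafifiable

theorem ne_fresh (h : S.Leafifiable y y') {v : α} (hv : v ∈ S.W) : v ≠ y' :=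
  fun e => h.fresh (e ▸ hv)

theorem notMem_arcs_fresh_left (h : S.Leafifiable y y') (c : α) : (y', c) ∉ S.A :=
  fun hc => h.fresh (S.arcs_subset _ hc).1

theorem notMem_arcs_fresh_right (h : S.Leafifiable y y') (u : α) : (u, y') ∉ S.A :=
  fun hu => h.fresh (S.arcs_subset _ hu).2

end Leafifiable

variable [DecidableEq α]

/-- The arcs after leafication: `y` is renamed to `y'`, and the arc `(y', y)` is added. The renaming
is pulled back along the involution `swap y y'`, and needs no mention of the neighbours of `y`. -/
def leafArcs (S : Schedule I) (y y' : α) : Set (α × α) :=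
  insert (y', y) (Prod.map (swap y y') (swap y y') ⁻¹' S.A)

theorem mem_leafArcs {a b : α} :
    (a, b) ∈ S.leafArcs y y' ↔ a = y' ∧ b = y ∨ (swap y y' a, swap y y' b) ∈ S.A := by
  rw [leafArcs, Set.mem_insert_iff, Prod.mk.injEq]
  rfl

theorem swap_mem_leafArcs {a b : α} (hab : (a, b) ∈ S.A) :
    (swap y y' a, swap y y' b) ∈ S.leafArcs y y' := by
  rw [mem_leafArcs, Equiv.swap_apply_self, Equiv.swap_apply_self]
  exact .inr hab

theorem fresh_leaf_mem_leafArcs : (y', y) ∈ S.leafArcs y y' :=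
  mem_leafArcs.2 (.inl ⟨rfl, rfl⟩)

namespace Leafifiable

theorem swap_apply (h : S.Leafifiable y y') {v : α} (hv : v ∈ S.W) (hvy : v ≠ y) :
    swap y y' v = v :=
  Equiv.swap_apply_of_ne_of_ne hvy (h.ne_fresh hv)

theorem swap_root (h : S.Leafifiable y y') : swap y y' I.r = I.r :=
  h.swap_apply S.root_mem h.ne_root.symm

theorem notMem_leafArcs_leaf (h : S.Leafifiable y y') (c : α) : (y, c) ∉ S.leafArcs y y' := by
  rw [mem_leafArcs, Equiv.swap_apply_left]
  rintro (⟨hy, -⟩ | hc)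
  exacts [h.ne_fresh h.mem hy, h.notMem_arcs_fresh_left _ hc]

theorem mem_leafArcs_leaf (h : S.Leafifiable y y') {u : α} :
    (u, y) ∈ S.leafArcs y y' ↔ u = y' := by
  rw [mem_leafArcs, Equiv.swap_apply_left, and_iff_left rfl,
    or_iff_left (h.notMem_arcs_fresh_right _)]

theorem ncard_leafArcs_leaf (h : S.Leafifiable y y') :
    {c | (y, c) ∈ S.leafArcs y y'}.ncard = 0 := by
  rw [Set.eq_empty_of_forall_notMem (s := {c | (y, c) ∈ S.leafArcs y y'}) h.notMem_leafArcs_leaf,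
    Set.ncard_empty]

theorem ncard_leafArcs_fresh (h : S.Leafifiable y y') :
    {c | (y', c) ∈ S.leafArcs y y'}.ncard = 2 := by
  have hchildren : {c | (y', c) ∈ S.leafArcs y y'} =
      insert y (swap y y' '' {c | (y, c) ∈ S.A}) := by
    ext c
    rw [Equiv.image_eq_preimage_symm, Equiv.symm_swap, Set.mem_ofPred_eq, mem_leafArcs,
      Equiv.swap_apply_right, and_iff_right rfl]
    rfl
  have hy : y ∉ swap y y' '' {c | (y, c) ∈ S.A} := by
    rintro ⟨c, hc, hcy⟩
    rw [Equiv.swap_apply_eq_iff, Equiv.swap_apply_left] at hcy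
    exact h.notMem_arcs_fresh_right y (hcy ▸ hc)
  rw [hchildren, Set.ncard_insert_of_notMem hy ((S.finite_children y).image _),
    Set.ncard_image_of_injective _ (swap y y').injective]
  exact congrArg (· + 1) h.outDeg_eq

theorem ncard_leafArcs_of_ne {v : α} (hvy : v ≠ y) (hvy' : v ≠ y') :
    {c | (v, c) ∈ S.leafArcs y y'}.ncard = S.outDeg v := by
  have hchildren : {c | (v, c) ∈ S.leafArcs y y'} = swap y y' '' {c | (v, c) ∈ S.A} := by
    ext c
    rw [Equiv.image_eq_preimage_symm, Equiv.symm_swap, Set.mem_ofPred_eq, mem_leafArcs,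
      Equiv.swap_apply_of_ne_of_ne hvy hvy', or_iff_right fun hv => hvy' hv.1]
    rfl
  rw [hchildren, Set.ncard_image_of_injective _ (swap y y').injective]
  rfl

theorem leafArcs_subset (h : S.Leafifiable y y') {a : α × α} (ha : a ∈ S.leafArcs y y') :
    a.1 ∈ insert y' S.W ∧ a.2 ∈ insert y' S.W := by
  have hmem : ∀ {v}, swap y y' v ∈ S.W → v ∈ insert y' S.W := by
    intro v hv
    by_cases hvy : v = y
    · exact .inr (hvy ▸ h.mem)
    by_cases hvy' : v = y'
    · exact .inl hvy'
    · exact .inr (Equiv.swap_apply_of_ne_of_ne hvy hvy' ▸ hv)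
  obtain rfl | ha := ha
  · exact ⟨.inl rfl, .inr h.mem⟩
  · exact ⟨hmem (S.arcs_subset _ ha).1, hmem (S.arcs_subset _ ha).2⟩

theorem existsUnique_leafArcs (h : S.Leafifiable y y') {v : α} (hv : v ∈ insert y' S.W)
    (hvr : v ≠ I.r) : ∃! u, (u, v) ∈ S.leafArcs y y' := by
  by_cases hvy : v = y
  · simp only [hvy, h.mem_leafArcs_leaf, existsUnique_eq]
  simp only [mem_leafArcs, hvy, and_false, false_or]
  refine ((swap y y').existsUnique_congr_right (q := fun u => (u, swap y y' v) ∈ S.A)).2 ?_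
  obtain rfl | hv := hv
  · rw [Equiv.swap_apply_right]
    exact S.unique_in_arc y h.mem h.ne_root
  · rw [h.swap_apply hv hvy]
    exact S.unique_in_arc v hv hvr

theorem reflTransGen_leafArcs_swap {a b : α} (hab : S.reach a b) :
    Relation.ReflTransGen (fun u v => (u, v) ∈ S.leafArcs y y') (swap y y' a) (swap y y' b) :=
  Relation.ReflTransGen.lift _ (fun _ _ => swap_mem_leafArcs) _ _ hab

theorem reflTransGen_leafArcs (h : S.Leafifiable y y') {a b : α} (hb : b ∈ S.W)
    (hab : S.reach a b) :
    Relation.ReflTransGen (fun u v => (u, v) ∈ S.leafArcs y y') (swap y y' a) b := by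
  by_cases hby : b = y
  · have hay' := reflTransGen_leafArcs_swap (y := y) (y' := y') hab
    rw [hby, Equiv.swap_apply_left] at hay'
    exact hby ▸ hay'.tail fresh_leaf_mem_leafArcs
  · exact h.swap_apply hb hby ▸ reflTransGen_leafArcs_swap hab

/-- The schedule obtained from `S` by turning `y` into a leaf hanging off the new vertex `y'`, which
is placed where `y` is. -/
noncomputable def leafify (h : S.Leafifiable y y') : Schedule I where
  W := insert y' S.W
  A := S.leafArcs y y'
  μ := Function.update S.μ y' (S.μ y)
  finite_W := S.finite_W.insert _
  root_mem := .inr S.root_mem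
  items_subset := fun _ hp => .inr (S.items_subset hp)
  arcs_subset := fun _ => h.leafArcs_subset
  no_arc_into_root := by
    intro u
    rw [mem_leafArcs, h.swap_root]
    rintro (⟨-, hr⟩ | hu)
    exacts [h.ne_root hr.symm, S.no_arc_into_root _ hu]
  unique_in_arc := fun _ => h.existsUnique_leafArcs
  reachable := by
    rintro v (rfl | hv)
    · simpa only [h.swap_root, Equiv.swap_apply_left]
        using reflTransGen_leafArcs_swap (y := y) (y' := v) (S.reachable y h.mem)
    · simpa only [h.swap_root] using h.reflTransGen_leafArcs hv (S.reachable v hv)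
  outdeg_le_two := by
    intro v hv
    by_cases hvy : v = y
    · exact hvy ▸ h.ncard_leafArcs_leaf.trans_le zero_le_two
    by_cases hvy' : v = y'
    · exact hvy' ▸ h.ncard_leafArcs_fresh.le
    · rw [ncard_leafArcs_of_ne hvy hvy']
      exact S.outdeg_le_two v (hv.resolve_left hvy')
  items_outdeg_le_one := by
    intro p hp
    by_cases hpy : p = y
    · exact hpy ▸ h.ncard_leafArcs_leaf.trans_le zero_le_one
    · rw [ncard_leafArcs_of_ne hpy (h.ne_fresh (S.items_subset hp))]
      exact S.items_outdeg_le_one p hp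
  μ_placement := by
    intro v hv
    have hvW : v ∈ S.W := Set.insert_subset S.root_mem S.items_subset hv
    rw [Function.update_of_ne (h.ne_fresh hvW)]
    exact S.μ_placement v hv

theorem leafify_μ_of_mem (h : S.Leafifiable y y') {v : α} (hv : v ∈ S.W) :
    h.leafify.μ v = S.μ v :=
  Function.update_of_ne (h.ne_fresh hv) ..

theorem leafify_μ_fresh (h : S.Leafifiable y y') : h.leafify.μ y' = S.μ y :=
  Function.update_self ..

theorem leafify_μ_swap (h : S.Leafifiable y y') {v : α} (hv : v ∈ S.W) :
    h.leafify.μ (swap y y' v) = S.μ v := by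
  by_cases hvy : v = y
  · rw [hvy, Equiv.swap_apply_left, h.leafify_μ_fresh]
  · rw [h.swap_apply hv hvy, h.leafify_μ_of_mem hv]

-- Collapsing `y'` onto `y` sends the arc `(y', y)` to a point and undoes the renaming elsewhere.
theorem reach_collapse (h : S.Leafifiable y y') {a b : α} (hab : h.leafify.reach a b) :
    S.reach (Function.update id y' y a) (Function.update id y' y b) := by
  have hcollapse : ∀ {v}, swap y y' v ∈ S.W → Function.update id y' y v = swap y y' v := by
    intro v hv
    by_cases hvy' : v = y'
    · rw [hvy', Function.update_self, Equiv.swap_apply_right]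
    have hvy : v ≠ y := by
      rintro rfl
      exact h.fresh (Equiv.swap_apply_left v y' ▸ hv)
    rw [Function.update_of_ne hvy', id, Equiv.swap_apply_of_ne_of_ne hvy hvy']
  refine Relation.ReflTransGen.lift' _ (fun u v huv => ?_) _ _ hab
  change S.reach _ _
  obtain ⟨rfl, rfl⟩ | huv := mem_leafArcs.1 huv
  · rw [Function.update_self, Function.update_of_ne (h.ne_fresh h.mem)]
    exact .refl
  · obtain ⟨hu, hv⟩ := S.arcs_subset _ huv
    rw [hcollapse hu, hcollapse hv]
    exact .single huv

theorem reach_leafify_swap_iff (h : S.Leafifiable y y') {a b : α} (ha : a ∈ S.W) (hb : b ∈ S.W) :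
    h.leafify.reach (swap y y' a) b ↔ S.reach a b := by
  refine ⟨fun hab => ?_, h.reflTransGen_leafArcs hb⟩
  have ha' : Function.update id y' y (swap y y' a) = a := by
    by_cases hay : a = y
    · rw [hay, Equiv.swap_apply_left, Function.update_self]
    · rw [h.swap_apply ha hay, Function.update_of_ne (h.ne_fresh ha), id]
  simpa only [ha', Function.update_of_ne (h.ne_fresh hb), id] using h.reach_collapse hab

theorem items_desc_leafify_swap (h : S.Leafifiable y y') {c : α} (hc : c ∈ S.W) :
    (↑I.P : Set α) ∩ h.leafify.desc (swap y y' c) = ↑I.P ∩ S.desc c := by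
  ext p
  refine and_congr_right fun hp => ?_
  have hpW := S.items_subset hp
  exact and_congr (iff_of_true (.inr hpW) hpW) (h.reach_leafify_swap_iff hc hpW)

theorem handover_leafify_swap_le (h : S.Leafifiable y y') {v : α} (hv : S.outDeg v ≠ 0) :
    h.leafify.handover (swap y y' v) ≤ S.handover v := by
  obtain ⟨c, hvc, hc⟩ := S.exists_handover_eq hv
  rw [hc, ← h.items_desc_leafify_swap (S.arcs_subset _ hvc).2]
  exact h.leafify.handover_le (swap_mem_leafArcs hvc)

theorem handover_leafify_fresh_le_handover (h : S.Leafifiable y y') :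
    h.leafify.handover y' ≤ S.handover y := by
  simpa only [Equiv.swap_apply_left]
    using h.handover_leafify_swap_le (v := y) (h.outDeg_eq ▸ one_ne_zero)

theorem desc_leafify_leaf_subset (h : S.Leafifiable y y') : h.leafify.desc y ⊆ {y} := by
  rintro v ⟨-, hyv⟩
  obtain hv | ⟨c, hyc, -⟩ := hyv.cases_head
  · exact hv.symm
  · exact absurd hyc (h.notMem_leafArcs_leaf c)

theorem handover_leafify_fresh_le_indicator (h : S.Leafifiable y y') :
    h.leafify.handover y' ≤ (↑I.P : Set α).indicator 1 y := by
  refine (h.leafify.handover_le fresh_leaf_mem_leafArcs).trans ?_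
  refine (Set.ncard_le_ncard (Set.inter_subset_inter_right _ h.desc_leafify_leaf_subset)).trans ?_
  by_cases hy : y ∈ I.P <;> simp [hy]

theorem nodeDelay_leafify_fresh (h : S.Leafifiable y y') :
    h.leafify.nodeDelay y' = h.leafify.handover y' := by
  have hy' : y' ∉ (↑I.P : Set α) := fun hy' => h.fresh (S.items_subset hy')
  have hdeg : y' ∈ {w | h.leafify.outDeg w = 2} := h.ncard_leafArcs_fresh
  rw [nodeDelay, Set.indicator_of_notMem hy', Set.indicator_of_mem hdeg, zero_add]

theorem nodeDelay_leafify_leaf (h : S.Leafifiable y y') :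
    h.leafify.nodeDelay y = S.nodeDelay y := by
  have hdeg : h.leafify.outDeg y = 0 := h.ncard_leafArcs_leaf
  rw [nodeDelay_of_outDeg_ne_two _ (by simp [hdeg]),
    nodeDelay_of_outDeg_ne_two _ (by simp [h.outDeg_eq])]

theorem nodeDelay_leafify_swap_le (h : S.Leafifiable y y') {v : α} (hv : v ∈ S.W) :
    h.leafify.nodeDelay (swap y y' v) ≤ S.nodeDelay v := by
  by_cases hvy : v = y
  · subst hvy
    rw [Equiv.swap_apply_left, h.nodeDelay_leafify_fresh]
    refine le_trans ?_ (S.indicator_items_le_nodeDelay v)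
    have hle := h.handover_leafify_fresh_le_indicator
    by_cases hvP : v ∈ (↑I.P : Set α)
    · rw [Set.indicator_of_mem hvP] at hle ⊢
      exact (Nat.cast_le_one.2 hle).trans I.one_le_δ
    · rw [Set.indicator_of_notMem hvP] at hle ⊢
      exact_mod_cast hle
  have hdeg : h.leafify.outDeg v = S.outDeg v := ncard_leafArcs_of_ne hvy (h.ne_fresh hv)
  rw [h.swap_apply hv hvy]
  unfold nodeDelay
  simp only [Set.indicator_apply, Set.mem_ofPred_eq, hdeg]
  gcongr
  split_ifs with hv2
  · have hle := h.handover_leafify_swap_le (v := v) (by simp [hv2])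
    exact_mod_cast h.swap_apply hv hvy ▸ hle
  · rfl

theorem delayTo_leafify_swap_le (h : S.Leafifiable y y') {v : α} (hv : v ∈ S.W) :
    h.leafify.delayTo (swap y y' v) ≤ S.delayTo v := by
  have hrv : S.reach I.r v := S.reachable v hv
  induction hrv with
  | refl =>
    rw [h.swap_root, delayTo_root, delayTo_root]
    simpa only [h.swap_root] using h.nodeDelay_leafify_swap_le S.root_mem
  | @tail a b _ hab ih =>
    have ha : a ∈ S.W := (S.arcs_subset _ hab).1
    rw [h.leafify.delayTo_of_arc (swap_mem_leafArcs hab), S.delayTo_of_arc hab,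
      h.leafify_μ_swap ha, h.leafify_μ_swap hv]
    gcongr
    exacts [ih ha, h.nodeDelay_leafify_swap_le hv]

theorem delayTo_leafify_leaf_le (h : S.Leafifiable y y') :
    h.leafify.delayTo y ≤ S.delayTo y + h.leafify.handover y' := by
  obtain ⟨x, hxy, -⟩ := S.unique_in_arc y h.mem h.ne_root
  have hx : x ∈ S.W := (S.arcs_subset _ hxy).1
  have hxy' : (swap y y' x, y') ∈ S.leafArcs y y' := by
    simpa only [Equiv.swap_apply_left] using swap_mem_leafArcs (y := y) (y' := y') hxy
  rw [h.leafify.delayTo_of_arc fresh_leaf_mem_leafArcs, h.leafify.delayTo_of_arc hxy',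
    S.delayTo_of_arc hxy, h.leafify_μ_swap hx, h.leafify_μ_fresh,
    h.leafify_μ_of_mem h.mem, dist_self, h.nodeDelay_leafify_fresh, h.nodeDelay_leafify_leaf]
  linarith [h.delayTo_leafify_swap_le hx]

theorem delayTo_leafify_leaf_le_delay (h : S.Leafifiable y y') (hy : y ∈ I.P) :
    h.leafify.delayTo y ≤ S.delay := by
  have hleaf := h.delayTo_leafify_leaf_le
  obtain hzero | hpos := (Nat.zero_le (h.leafify.handover y')).eq_or_lt
  · rw [← hzero, Nat.cast_zero, add_zero] at hleaf
    exact hleaf.trans (S.delayTo_le_delay hy)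
  obtain ⟨q, hq, hyq⟩ := S.exists_item_strictReach (h.outDeg_eq ▸ one_ne_zero)
    (hpos.trans_le h.handover_leafify_fresh_le_handover)
  have hone : (h.leafify.handover y' : ℝ) ≤ 1 := by
    have hle := h.handover_leafify_fresh_le_indicator
    rw [Set.indicator_of_mem (Finset.mem_coe.2 hy)] at hle
    exact_mod_cast hle
  calc h.leafify.delayTo y ≤ S.delayTo y + I.δ := by linarith [I.one_le_δ]
    _ ≤ S.delayTo q := S.delayTo_add_le_of_strictReach hyq hq
    _ ≤ S.delay := S.delayTo_le_delay hq

theorem delay_leafify_le (h : S.Leafifiable y y') : h.leafify.delay ≤ S.delay := by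
  refine Finset.sup'_le _ _ fun p hp => ?_
  by_cases hpy : p = y
  · exact hpy ▸ h.delayTo_leafify_leaf_le_delay (hpy ▸ hp)
  · have hpW := S.items_subset hp
    have hle := h.delayTo_leafify_swap_le hpW
    rw [h.swap_apply hpW hpy] at hle
    exact hle.trans (S.delayTo_le_delay hp)

theorem leafArcs_eq (h : S.Leafifiable y y') {x z : α} (hxy : (x, y) ∈ S.A) (hyz : (y, z) ∈ S.A) :
    S.leafArcs y y' = (S.A \ {(x, y), (y, z)}) ∪ {(x, y'), (y', y), (y', z)} := by
  have hparent : ∀ u, (u, y) ∈ S.A ↔ u = x :=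
    fun u => ⟨fun hu => S.arc_tail_unique hu hxy, fun hu => hu ▸ hxy⟩
  have hchild : ∀ c, (y, c) ∈ S.A ↔ c = z := by
    obtain ⟨t, ht⟩ := Set.ncard_eq_one.1 h.outDeg_eq
    have hmem : ∀ c, (y, c) ∈ S.A ↔ c = t := fun c => Set.ext_iff.1 ht c
    exact fun c => by rw [hmem, (hmem z).1 hyz]
  have hloop : (y, y) ∉ S.A := fun hyy => S.not_reach_of_arc hyy .refl
  have hleft := h.notMem_arcs_fresh_left
  have hright := h.notMem_arcs_fresh_right
  have hyy' := h.ne_fresh h.mem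
  ext ⟨a, b⟩
  simp only [mem_leafArcs, Equiv.swap_apply_def, Set.mem_union, Set.mem_sdiff, Set.mem_insert_iff,
    Set.mem_singleton_iff, Prod.mk.injEq]
  grind

end Leafifiable

end Schedule

/-- **Leafication does not increase delay.**
Let `(W,A,μ)` be a schedule and `y ∈ W ∖ {r}` a vertex of out-degree 1 with
incident arcs `(x,y),(y,z) ∈ A`. Let `y' ∉ W` be a new vertex and define
`W' := W ∪ {y'}`, `A' := (A ∖ {(x,y),(y,z)}) ∪ {(x,y'),(y',y),(y',z)}`,
`μ' := μ` on `W` and `μ'(y') := μ(y)`. Then `(W',A',μ')` is a schedule and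
`delay(W',A',μ') ≤ delay(W,A,μ)`. -/
theorem leafication_delay [DecidableEq α] (I : VRInstance α M) (S : Schedule I)
    (x y z y' : α) (hyW : y ∈ S.W) (hyr : y ≠ I.r) (hydeg : S.outDeg y = 1)
    (hxy : (x, y) ∈ S.A) (hyz : (y, z) ∈ S.A) (hy' : y' ∉ S.W) :
    ∃ S' : Schedule I,
      S'.W = insert y' S.W ∧
      S'.A = (S.A \ {(x, y), (y, z)}) ∪ {(x, y'), (y', y), (y', z)} ∧
      S'.μ = Function.update S.μ y' (S.μ y) ∧
      S'.delay ≤ S.delay := by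
  have h : S.Leafifiable y y' := ⟨hyW, hyr, hydeg, hy'⟩
  exact ⟨h.leafify, rfl, h.leafArcs_eq hxy hyz, rfl, h.delay_leafify_le⟩
end

section
/- Tour splitting: Let (M,c) be a metric space, r ∈ M, and P ⊆ M a finite set of n ≥ 1 points. Let s ∈ P satisfy c(r,s) = max_{p∈P} c(r,p), let MST denote the minimum total length of a tree with vertex set {r} ∪ P (edges weighted by c), and let ε > 0 and 0 < Δ ≤ MST. Then there exists a set F of unordered pairs of distinct elements of P such that the graph (P,F) is a vertex-disjoint union of paths and: (a) the number of connected components of (P,F) is at most 1 + (n + 2·MST − c(r,s))/(εΔ); (b) every connected component has total edge length at most εΔ; (c) every connected component has at most 1 + εΔ vertices; (d) the total edge length Σ_{{u,v}∈F} c(u,v) is at most 2·MST − c(r,s). -/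
/-- The weight of an unordered pair of points of a metric space: their
distance. -/
noncomputable def pairDist {M : Type*} [MetricSpace M] {S : Set M} :
    Sym2 ↥S → ℝ :=
  Sym2.lift ⟨fun u v => dist (u : M) (v : M), fun u v => dist_comm _ _⟩

/-- The minimum total length of a tree with vertex set `S`, edges weighted by
the metric distance. -/
noncomputable def mstOn {M : Type*} [MetricSpace M] (S : Set M) : ℝ :=
  sInf {x : ℝ | ∃ T : SimpleGraph ↥S, T.IsTree ∧
    x = ∑ᶠ e ∈ T.edgeSet, pairDist e}

/-!
A spanning tree has a walk from `r` to `s` that visits every vertex, traversing the edges of the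
tree path between them once and all other edges twice; its length is at most `2·MST − c(r,s)`. By
the triangle inequality, listing the points of `P` by the times at which the walk meets them gives a
Hamiltonian path on `P` that is no longer. Place each point at the coordinate obtained by adding up
`length + 1` over the preceding edges of this path, and delete the edges across which the integer
part of `coordinate / (εΔ)` changes. Within a remaining piece the coordinate varies by less than
`εΔ`, which bounds both its length and its number of edges, and there are no more pieces than
integer parts.
-/

/-! ### Covering walks -/

section CoveringWalk

open SimpleGraph

variable {V : Type*} {G : SimpleGraph V} {r s u v : V}

/-- The walk `w` with a there-and-back excursion along the edge `uv` inserted at a visit to `u`. -/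
def detour [DecidableEq V] (w : G.Walk r s) (hu : u ∈ w.support) (huv : G.Adj u v) : G.Walk r s :=
  (w.takeUntil u hu).append (.cons huv (.cons huv.symm (w.dropUntil u hu)))

lemma edges_detour_perm [DecidableEq V] (w : G.Walk r s) (hu : u ∈ w.support) (huv : G.Adj u v) :
    (detour w hu huv).edges.Perm (s(u, v) :: s(u, v) :: w.edges) := by
  conv_rhs => rw [← w.take_spec hu]
  simp only [detour, Walk.edges_append, Walk.edges_cons, Sym2.eq_swap (a := v)]
  exact List.perm_middle.trans (List.perm_middle.cons _)

lemma mem_support_detour [DecidableEq V] (w : G.Walk r s) (hu : u ∈ w.support)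
    (huv : G.Adj u v) {x : V} : x ∈ (detour w hu huv).support ↔ x = v ∨ x ∈ w.support := by
  conv_rhs => rw [← w.take_spec hu]
  simp only [detour, Walk.mem_support_append_iff, Walk.support_cons, List.mem_cons]
  have := (w.takeUntil u hu).end_mem_support
  grind

-- Detouring to new vertices keeps the edges of `p` used once and all other used edges used twice.
lemma exists_covering_walk [Finite V] [DecidableEq V] {R : Type*} [AddCommMonoid R]
    (hG : G.Preconnected) (c : Sym2 V → R) {p : G.Walk r s} (hp : p.IsTrail) :
    ∃ w : G.Walk r s, (∀ v, v ∈ w.support) ∧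
      (w.edges.map c).sum + (p.edges.map c).sum = 2 • ∑ e ∈ w.edges.toFinset, c e := by
  let balanced : Set (G.Walk r s) :=
    {w | (w.edges.map c).sum + (p.edges.map c).sum = 2 • ∑ e ∈ w.edges.toFinset, c e}
  have hp_balanced : p ∈ balanced := by
    simp only [balanced, Set.mem_ofPred_eq, List.sum_toFinset c hp.edges_nodup, two_nsmul]
  obtain ⟨w, hw, hmax⟩ := Set.Finite.exists_maximalFor' (fun w : G.Walk r s => {x | x ∈ w.support})
    balanced (Set.toFinite _) ⟨p, hp_balanced⟩
  refine ⟨w, fun a => ?_, hw⟩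
  by_contra ha
  obtain ⟨q⟩ := hG r a
  obtain ⟨⟨⟨u, v⟩, huv : G.Adj u v⟩, -, hu : u ∈ w.support, hv : v ∉ w.support⟩ :=
    q.exists_boundary_dart {x | x ∈ w.support} w.start_mem_support ha
  have hperm := edges_detour_perm w hu huv
  have hnew : s(u, v) ∉ w.edges.toFinset := fun h =>
    hv (w.snd_mem_support_of_mem_edges (List.mem_toFinset.1 h))
  have hdetour : detour w hu huv ∈ balanced := by
    simp only [balanced, Set.mem_ofPred_eq] at hw ⊢
    rw [(hperm.map c).sum_eq, List.toFinset_eq_of_perm _ _ hperm, List.toFinset_cons,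
      List.toFinset_cons, Finset.insert_idem, Finset.sum_insert hnew, nsmul_add, ← hw]
    simp only [List.map_cons, List.sum_cons, two_nsmul, add_assoc]
  exact hv (hmax hdetour (fun x hx => (mem_support_detour w hu huv).2 (.inr hx))
    ((mem_support_detour w hu huv).2 (.inl rfl)))

lemma sum_map_edges {R : Type*} [AddCommMonoid R] (c : Sym2 V → R) (w : G.Walk r s) :
    (w.edges.map c).sum = ∑ i ∈ Finset.range w.length, c s(w.getVert i, w.getVert (i + 1)) := by
  induction w with
  | nil => simp
  | cons h w ih =>
    rw [Walk.edges_cons, List.map_cons, List.sum_cons, ih, add_comm, Walk.length_cons,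
      Finset.sum_range_succ']
    simp only [Walk.getVert_cons_succ, Walk.getVert_zero]

end CoveringWalk

/-! ### Shortcutting a tour of a spanning tree -/

section Tour

open SimpleGraph

variable {M : Type*} [MetricSpace M] {S : Set M}

lemma pairDist_nonneg (e : Sym2 ↥S) : 0 ≤ pairDist e :=
  e.ind fun _ _ => dist_nonneg

lemma exists_isTree_eq_mstOn [Finite ↥S] [Nonempty ↥S] :
    ∃ T : SimpleGraph ↥S, T.IsTree ∧ mstOn S = ∑ᶠ e ∈ T.edgeSet, pairDist e := by
  obtain ⟨T₀, -, hT₀⟩ := (connected_top (V := ↥S)).exists_isTree_le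
  refine Set.Nonempty.csInf_mem (s := {x | ∃ T : SimpleGraph ↥S, T.IsTree ∧ x = _})
    ⟨_, T₀, hT₀, rfl⟩ <| Set.Finite.subset
      (Set.finite_range fun T : SimpleGraph ↥S => ∑ᶠ e ∈ T.edgeSet, pairDist e) ?_
  rintro _ ⟨T, -, rfl⟩
  exact ⟨T, rfl⟩

lemma exists_covering_walk_length_le [Finite ↥S] {T : SimpleGraph ↥S} (hT : T.Preconnected)
    (r s : ↥S) : ∃ w : T.Walk r s, (∀ v, v ∈ w.support) ∧
      ∑ i ∈ Finset.range w.length, dist (w.getVert i) (w.getVert (i + 1)) ≤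
        2 * ∑ᶠ e ∈ T.edgeSet, pairDist e - dist r s := by
  classical
  obtain ⟨p, hp⟩ := (hT r s).exists_isPath
  obtain ⟨w, hcover, hw⟩ := exists_covering_walk hT pairDist hp.isTrail
  refine ⟨w, hcover, ?_⟩
  have hlength (q : T.Walk r s) : (q.edges.map pairDist).sum =
      ∑ i ∈ Finset.range q.length, dist (q.getVert i) (q.getVert (i + 1)) := sum_map_edges _ q
  have hp_length : dist r s ≤ (p.edges.map pairDist).sum := by
    simpa only [hlength, p.getVert_zero, p.getVert_length] using
      dist_le_range_sum_dist p.getVert p.length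
  have hedges : ∑ e ∈ w.edges.toFinset, pairDist e ≤ ∑ᶠ e ∈ T.edgeSet, pairDist e := by
    rw [finsum_mem_eq_finite_toFinset_sum _ T.edgeSet.toFinite]
    refine Finset.sum_le_sum_of_subset_of_nonneg (fun e he => ?_) fun e _ _ => pairDist_nonneg e
    exact (Set.Finite.mem_toFinset _).2 (w.edges_subset_edgeSet (List.mem_toFinset.1 he))
  rw [hlength, two_nsmul] at hw
  linarith

lemma sum_dist_succ_le {V X : Type*} [LinearOrder V] [SuccOrder V] [Fintype V]
    [PseudoMetricSpace X] (x : ℕ → X) {f : V → ℕ} (hf : Monotone f) {N : ℕ}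
    (hN : ∀ v, f v ≤ N) :
    ∑ v, dist (x (f v)) (x (f (Order.succ v))) ≤
      ∑ i ∈ Finset.range N, dist (x i) (x (i + 1)) := by
  have hdisj : Pairwise (Function.onFun Disjoint fun v => Finset.Ico (f v) (f (Order.succ v))) :=
    fun u v huv => by
      simpa only [← Finset.disjoint_coe, Finset.coe_Ico] using
        hf.pairwise_disjoint_on_Ico_succ huv
  calc ∑ v, dist (x (f v)) (x (f (Order.succ v)))
    _ ≤ ∑ v, ∑ i ∈ Finset.Ico (f v) (f (Order.succ v)), dist (x i) (x (i + 1)) :=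
      Finset.sum_le_sum fun v _ => dist_le_Ico_sum_dist x (hf (Order.le_succ v))
    _ = ∑ i ∈ Finset.univ.biUnion fun v => Finset.Ico (f v) (f (Order.succ v)),
          dist (x i) (x (i + 1)) := (Finset.sum_biUnion (hdisj.set_pairwise _)).symm
    _ ≤ ∑ i ∈ Finset.range N, dist (x i) (x (i + 1)) :=
      Finset.sum_le_sum_of_subset_of_nonneg (fun i hi => by
        obtain ⟨v, -, hv⟩ := Finset.mem_biUnion.1 hi
        exact Finset.mem_range.2 ((Finset.mem_Ico.1 hv).2.trans_le (hN _)))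
        fun _ _ _ => dist_nonneg

-- The points of `P` are ordered by the times at which a covering walk of the tree visits them.
lemma exists_linearOrder_sum_dist_succ_le {P : Set M} [Fintype ↥P] (hPS : P ⊆ S) (hS : S.Finite)
    {r s : M} (hr : r ∈ S) (hs : s ∈ S) :
    ∃ (_ : LinearOrder ↥P) (_ : SuccOrder ↥P),
      ∑ v : ↥P, dist v (Order.succ v) ≤ 2 * mstOn S - dist r s := by
  have : Finite ↥S := hS
  have : Nonempty ↥S := ⟨r, hr⟩
  obtain ⟨T, hT, hmst⟩ := exists_isTree_eq_mstOn (S := S)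
  obtain ⟨w, hcover, hw⟩ := exists_covering_walk_length_le hT.connected.preconnected ⟨r, hr⟩ ⟨s, hs⟩
  choose time htime htime_le using fun v : ↥P =>
    Walk.mem_support_iff_exists_getVert.1 (hcover (Set.inclusion hPS v))
  have hinj : Function.Injective time := fun u v huv =>
    Set.inclusion_injective hPS (by rw [← htime u, ← htime v, huv])
  let order : LinearOrder ↥P := LinearOrder.lift' time hinj
  let succOrder : SuccOrder ↥P := .ofLinearWellFoundedLT ↥P
  refine ⟨order, succOrder, ?_⟩
  have hmono : Monotone time := fun _ _ h => h
  have hshort := sum_dist_succ_le w.getVert hmono htime_le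
  simp only [htime] at hshort
  rw [hmst]
  exact hshort.trans hw

end Tour

/-! ### Monochromatic pieces of a linear order -/

section Monochromatic

open SimpleGraph

variable {V κ : Type*}

/-- The spanning subgraph of `G` that keeps the edges whose ends have the same colour. -/
def monochromaticSubgraph (G : SimpleGraph V) (col : V → κ) : SimpleGraph V where
  Adj u v := G.Adj u v ∧ col u = col v
  symm := ⟨fun _ _ h => ⟨h.1.symm, h.2.symm⟩⟩
  loopless := ⟨fun _ (h : G.Adj _ _ ∧ _) => G.irrefl h.1⟩

lemma monochromaticSubgraph_le (G : SimpleGraph V) (col : V → κ) :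
    monochromaticSubgraph G col ≤ G :=
  fun _ _ h => h.1

lemma apply_eq_of_reachable {G : SimpleGraph V} {f : V → κ} (hf : ∀ u v, G.Adj u v → f u = f v)
    {u v : V} (huv : G.Reachable u v) : f u = f v := by
  obtain ⟨w⟩ := huv
  induction w with
  | nil => rfl
  | cons hadj _ ih => exact (hf _ _ hadj).trans ih

lemma eq_of_reachable_monochromaticSubgraph {G : SimpleGraph V} {col : V → κ} {u v : V}
    (huv : (monochromaticSubgraph G col).Reachable u v) : col u = col v :=
  apply_eq_of_reachable (G := monochromaticSubgraph G col) (fun _ _ h => h.2) huv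

variable [LinearOrder V]

lemma isAcyclic_hasse : (hasse V).IsAcyclic := by
  have hbridge {a b : V} (hab : a ⋖ b) : (hasse V).IsBridge s(a, b) := by
    have hside {x y : V} (hxy : x ⋖ y) (hne : s(x, y) ≠ s(a, b)) : (x ≤ a) = (y ≤ a) := by
      refine propext ⟨fun hxa => ?_, hxy.le.trans⟩
      by_contra hya
      obtain rfl : x = a := hxa.eq_of_not_lt fun h => hxy.2 h (not_le.1 hya)
      exact hne (by rw [hxy.unique_right hab])
    refine isBridge_iff.2 fun hreach => hab.lt.not_ge ?_
    refine (apply_eq_of_reachable (f := (· ≤ a)) (fun x y hxy => ?_) hreach).mp le_rfl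
    obtain ⟨hxy | hyx, hne⟩ := deleteEdges_adj.1 hxy
    · exact hside hxy hne
    · exact (hside hyx fun h => hne (Sym2.eq_swap.trans h)).symm
  refine isAcyclic_iff_forall_adj_isBridge.2 fun a b hab => ?_
  rcases hab with hab | hba
  · exact hbridge hab
  · exact Sym2.eq_swap ▸ hbridge hba

lemma ncard_hasse_neighborSet_le_two (v : V) : ((hasse V).neighborSet v).ncard ≤ 2 := by
  have hsubsingleton {A : Set V} (hA : A.Subsingleton) : A.ncard ≤ 1 :=
    (Set.ncard_le_one hA.finite).2 hA
  exact (Set.ncard_union_le {u | v ⋖ u} {u | u ⋖ v}).trans <| add_le_add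
    (hsubsingleton fun _ ha _ hb => ha.unique_right hb)
    (hsubsingleton fun _ ha _ hb => ha.unique_left hb)

variable [SuccOrder V]

lemma exists_succ_eq_of_mem_edgeSet_hasse {e : Sym2 V} (he : e ∈ (hasse V).edgeSet) :
    ∃ v, ¬ IsMax v ∧ s(v, Order.succ v) = e := by
  induction e with | _ u v =>
  rcases he with huv | hvu
  · exact ⟨u, huv.lt.not_isMax, by rw [huv.succ_eq]⟩
  · exact ⟨v, hvu.lt.not_isMax, by rw [hvu.succ_eq, Sym2.eq_swap]⟩

variable [IsSuccArchimedean V]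

lemma reachable_monochromaticSubgraph_hasse [PartialOrder κ] {col : V → κ} (hcol : Monotone col)
    {u v : V} (huv : col u = col v) : (monochromaticSubgraph (hasse V) col).Reachable u v := by
  have hadj {a b x : V} (hab : col a = col b) (hx : x ∈ Set.Ico a b) :
      (monochromaticSubgraph (hasse V) col).Adj x (Order.succ x) :=
    ⟨.inl (Order.covBy_succ_of_not_isMax hx.2.not_isMax),
      (hcol (Order.le_succ x)).antisymm
        ((hcol (Order.succ_le_of_lt hx.2)).trans (hab.ge.trans (hcol hx.1)))⟩
  rw [reachable_iff_reflTransGen]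
  exact reflTransGen_of_succ _ (fun x hx => hadj huv hx) fun x hx => (hadj huv.symm hx).symm

lemma card_connectedComponent_monochromaticSubgraph_hasse_le {col : V → ℕ} (hcol : Monotone col)
    {k : ℕ} (hk : ∀ v, col v < k) :
    Nat.card (monochromaticSubgraph (hasse V) col).ConnectedComponent ≤ k := by
  let componentCol : (monochromaticSubgraph (hasse V) col).ConnectedComponent → Fin k :=
    ConnectedComponent.lift (fun v => ⟨col v, hk v⟩) fun _ _ p _ =>
      Fin.ext (show col _ = col _ from eq_of_reachable_monochromaticSubgraph ⟨p⟩)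
  have hinj : Function.Injective componentCol := by
    refine ConnectedComponent.ind fun u => ConnectedComponent.ind fun v huv => ?_
    exact ConnectedComponent.sound
      (reachable_monochromaticSubgraph_hasse hcol (Fin.ext_iff.1 huv))
  simpa only [Nat.card_fin] using Nat.card_le_card_of_injective componentCol hinj

end Monochromatic

/-! ### Lengths of subgraphs of a path -/

section Length

open SimpleGraph

variable {R : Type*} [AddCommMonoid R] [PartialOrder R] [IsOrderedAddMonoid R]

lemma finsum_mem_le_sum_of_subset_image {ι β : Type*} {w : β → R} (hw : ∀ b, 0 ≤ w b)
    {F : Set β} {J : Finset ι} {g : ι → β} (hF : F ⊆ g '' J) :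
    ∑ᶠ b ∈ F, w b ≤ ∑ j ∈ J, w (g j) := by
  classical
  rw [← Finset.coe_image] at hF
  rw [finsum_mem_eq_finite_toFinset_sum _ ((Finset.finite_toSet _).subset hF)]
  calc _ ≤ ∑ b ∈ J.image g, w b :=
        Finset.sum_le_sum_of_subset_of_nonneg
          (fun b hb => hF ((Set.Finite.mem_toFinset _).1 hb)) fun b _ _ => hw b
    _ ≤ ∑ j ∈ J, w (g j) := Finset.sum_image_le_of_nonneg fun b _ => hw b

variable {V : Type*} [LinearOrder V] [SuccOrder V] {w : Sym2 V → R}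

lemma finsum_edgeSet_le_sum_succ [Fintype V] (hw : ∀ e, 0 ≤ w e) {G : SimpleGraph V}
    (hG : G ≤ hasse V) :
    ∑ᶠ e ∈ G.edgeSet, w e ≤ ∑ v, w s(v, Order.succ v) :=
  finsum_mem_le_sum_of_subset_image hw fun e he => by
    obtain ⟨v, -, rfl⟩ := exists_succ_eq_of_mem_edgeSet_hasse (edgeSet_mono hG he)
    exact ⟨v, Finset.mem_coe.2 (Finset.mem_univ v), rfl⟩

lemma finsum_edges_within_le_sum_succ (hw : ∀ e, 0 ≤ w e) {G : SimpleGraph V} (hG : G ≤ hasse V)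
    {A : Finset V} (hA : A.Nonempty) :
    ∑ᶠ e ∈ {e ∈ G.edgeSet | ∀ v ∈ e, v ∈ A}, w e ≤
      ∑ v ∈ A.erase (A.max' hA), w s(v, Order.succ v) := by
  refine finsum_mem_le_sum_of_subset_image hw ?_
  rintro e ⟨he, heA⟩
  obtain ⟨v, hv, rfl⟩ := exists_succ_eq_of_mem_edgeSet_hasse (edgeSet_mono hG he)
  have hlt : v < A.max' hA :=
    (Order.lt_succ_of_not_isMax hv).trans_le (A.le_max' _ (heA _ (Sym2.mem_mk_right _ _)))
  exact ⟨v, Finset.mem_coe.2 (Finset.mem_erase.2 ⟨hlt.ne, heA _ (Sym2.mem_mk_left _ _)⟩), rfl⟩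

end Length

/-! ### Cutting a path into short blocks -/

section Blocks

open SimpleGraph

variable {V : Type*} [LinearOrder V] [Fintype V] {h : V → ℝ} {t : ℝ}

/-- The total cost of the elements preceding `v`: the position of `v` along a path on which it
costs `h u` to leave `u`. -/
def prefixSum (h : V → ℝ) (v : V) : ℝ :=
  ∑ u with u < v, h u

/-- The index of the block containing `v` when the path with leaving costs `h` is cut at the
multiples of `t`. -/
noncomputable def blockIndex (h : V → ℝ) (t : ℝ) (v : V) : ℕ :=
  ⌊prefixSum h v / t⌋₊

lemma prefixSum_nonneg (hh : ∀ v, 0 ≤ h v) (v : V) : 0 ≤ prefixSum h v :=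
  Finset.sum_nonneg fun u _ => hh u

lemma prefixSum_le_sum (hh : ∀ v, 0 ≤ h v) (v : V) : prefixSum h v ≤ ∑ u, h u :=
  Finset.sum_le_univ_sum_of_nonneg hh

lemma prefixSum_add_sum_le (hh : ∀ v, 0 ≤ h v) {a b : V} (hab : a ≤ b) {A : Finset V}
    (hA : ∀ v ∈ A, a ≤ v ∧ v < b) : prefixSum h a + ∑ v ∈ A, h v ≤ prefixSum h b := by
  have hdisj : Disjoint ({u | u < a} : Finset V) A :=
    Finset.disjoint_left.2 fun u hu huA =>
      (Finset.mem_filter.1 hu).2.not_ge (hA u huA).1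
  rw [prefixSum, ← Finset.sum_union hdisj]
  refine Finset.sum_le_sum_of_subset_of_nonneg (fun u hu => ?_) fun u _ _ => hh u
  refine Finset.mem_filter.2 ⟨Finset.mem_univ u, ?_⟩
  rcases Finset.mem_union.1 hu with hu | hu
  · exact (Finset.mem_filter.1 hu).2.trans_le hab
  · exact (hA u hu).2

lemma blockIndex_monotone (hh : ∀ v, 0 ≤ h v) (ht : 0 ≤ t) : Monotone (blockIndex h t) :=
  fun a b hab => Nat.floor_le_floor <| div_le_div_of_nonneg_right
    (by simpa using prefixSum_add_sum_le hh hab (A := ∅) (by simp)) ht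

lemma sum_erase_max'_lt_of_blockIndex_eq (hh : ∀ v, 0 ≤ h v) (ht : 0 < t) {A : Finset V}
    (hA : A.Nonempty) (hblock : ∀ u ∈ A, ∀ v ∈ A, blockIndex h t u = blockIndex h t v) :
    ∑ v ∈ A.erase (A.max' hA), h v < t := by
  have hspan := prefixSum_add_sum_le hh (A.min'_le _ (A.max'_mem hA))
    (A := A.erase (A.max' hA)) fun v hv =>
      ⟨A.min'_le v (Finset.mem_of_mem_erase hv), A.lt_max'_of_mem_erase_max' hA hv⟩
  have hfloor := Nat.floor_le (div_nonneg (prefixSum_nonneg hh (A.min' hA)) ht.le)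
  have hlt := Nat.lt_floor_add_one (prefixSum h (A.max' hA) / t)
  have heq : ⌊prefixSum h (A.min' hA) / t⌋₊ = ⌊prefixSum h (A.max' hA) / t⌋₊ :=
    hblock _ (A.min'_mem hA) _ (A.max'_mem hA)
  rw [heq, le_div_iff₀ ht] at hfloor
  rw [div_lt_iff₀ ht] at hlt
  linarith

variable [SuccOrder V]

lemma card_connectedComponent_blocks_le (hh : ∀ v, 0 ≤ h v) (ht : 0 ≤ t) :
    (Nat.card (monochromaticSubgraph (hasse V) (blockIndex h t)).ConnectedComponent : ℝ) ≤
      1 + (∑ v, h v) / t := by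
  have hlt (v : V) : blockIndex h t v < ⌊(∑ v, h v) / t⌋₊ + 1 := Nat.lt_succ_of_le <|
    Nat.floor_le_floor (div_le_div_of_nonneg_right (prefixSum_le_sum hh v) ht)
  calc _ ≤ ((⌊(∑ v, h v) / t⌋₊ + 1 : ℕ) : ℝ) :=
        Nat.cast_le.2 (card_connectedComponent_monochromaticSubgraph_hasse_le
          (blockIndex_monotone hh ht) hlt)
    _ ≤ 1 + (∑ v, h v) / t := by
      rw [Nat.cast_succ, add_comm]
      gcongr
      exact Nat.floor_le (div_nonneg (Finset.sum_nonneg fun v _ => hh v) ht)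

-- Charging one more than its weight to every edge makes a block of cost at most `t` short in
-- both senses: its length and its number of edges are at most `t`.
lemma exists_le_hasse_components_le {w : Sym2 V → ℝ} (hw : ∀ e, 0 ≤ w e) (ht : 0 < t) :
    ∃ G ≤ hasse V,
      (Nat.card G.ConnectedComponent : ℝ) ≤
        1 + (Fintype.card V + ∑ v, w s(v, Order.succ v)) / t ∧
      ∀ C : G.ConnectedComponent,
        ∑ᶠ e ∈ {e ∈ G.edgeSet | ∀ v ∈ e, G.connectedComponentMk v = C}, w e ≤ t ∧
        ({v | G.connectedComponentMk v = C}.ncard : ℝ) ≤ 1 + t := by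
  classical
  let h : V → ℝ := fun v => w s(v, Order.succ v) + 1
  have hh (v : V) : 0 ≤ h v := add_nonneg (hw _) zero_le_one
  have hG := monochromaticSubgraph_le (hasse V) (blockIndex h t)
  refine ⟨_, hG, ?_, fun C => ?_⟩
  · refine (card_connectedComponent_blocks_le hh ht.le).trans_eq ?_
    simp only [h, Finset.sum_add_distrib, Finset.sum_const, Finset.card_univ, nsmul_one, add_comm]
  · let A : Finset V := {v | connectedComponentMk _ v = C}
    have hmem (v : V) : v ∈ A ↔ connectedComponentMk _ v = C := by simp [A]
    have hA : A.Nonempty := C.exists_rep.imp fun v hv => (hmem v).2 hv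
    have hcost : ∑ v ∈ A.erase (A.max' hA), w s(v, Order.succ v) + (A.card - 1) < t := by
      have := sum_erase_max'_lt_of_blockIndex_eq hh ht hA fun u hu v hv =>
        eq_of_reachable_monochromaticSubgraph
          (ConnectedComponent.exact (((hmem u).1 hu).trans ((hmem v).1 hv).symm))
      simpa [h, Finset.sum_add_distrib, Finset.card_erase_of_mem (A.max'_mem hA),
        Nat.cast_pred hA.card_pos] using this
    have hlength : 0 ≤ ∑ v ∈ A.erase (A.max' hA), w s(v, Order.succ v) :=
      Finset.sum_nonneg fun v _ => hw _
    have hone : (1 : ℝ) ≤ A.card := Nat.one_le_cast.2 hA.card_pos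
    constructor
    · have := finsum_edges_within_le_sum_succ hw hG hA
      simp only [hmem] at this
      linarith
    · rw [← Finset.coe_filter_univ, Set.ncard_coe_finset]
      linarith

end Blocks

theorem tour_splitting_general {M : Type*} [MetricSpace M] (P : Finset M) {S : Set M}
    (hS : S.Finite) (hPS : (P : Set M) ⊆ S) {r s : M} (hr : r ∈ S) (hs : s ∈ S)
    {t : ℝ} (ht : 0 < t) :
    ∃ G : SimpleGraph ↥(↑P : Set M),
      G.IsAcyclic ∧
      (∀ v : ↥(↑P : Set M), {u | G.Adj v u}.ncard ≤ 2) ∧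
      (Nat.card G.ConnectedComponent : ℝ) ≤ 1 + ((P.card : ℝ) + 2 * mstOn S - dist r s) / t ∧
      (∀ C : G.ConnectedComponent,
        (∑ᶠ e ∈ {e ∈ G.edgeSet | ∀ v ∈ e, G.connectedComponentMk v = C}, pairDist e) ≤ t) ∧
      (∀ C : G.ConnectedComponent,
        ({v | G.connectedComponentMk v = C}.ncard : ℝ) ≤ 1 + t) ∧
      (∑ᶠ e ∈ G.edgeSet, pairDist e) ≤ 2 * mstOn S - dist r s := by
  obtain ⟨_, _, hlength⟩ := exists_linearOrder_sum_dist_succ_le hPS hS hr hs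
  obtain ⟨G, hG, hcard, hcomponent⟩ := 
    exists_le_hasse_components_le (pairDist_nonneg (S := (↑P : Set M))) ht
  refine ⟨G, isAcyclic_hasse.anti hG, fun v => ?_, hcard.trans ?_,
    fun C => (hcomponent C).1, fun C => (hcomponent C).2,
    (finsum_edgeSet_le_sum_succ pairDist_nonneg hG).trans hlength⟩
  · exact (Set.ncard_le_ncard (fun u hu => hG hu) (Set.toFinite _)).trans
      (ncard_hasse_neighborSet_le_two v)
  · rw [add_sub_assoc]
    gcongr
    · simp
    · exact hlength

/-- **Tour splitting.** Let `(M,c)` be a metric space, `r ∈ M`, `P ⊆ M`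
finite with `n ≥ 1` points, `s ∈ P` farthest from `r`, `MST` the minimum
length of a tree with vertex set `{r} ∪ P`, `ε > 0` and `0 < Δ ≤ MST`.
Then there is a graph on `P` that is a vertex-disjoint union of paths
(equivalently: acyclic with all degrees at most 2) such that
(a) it has at most `1 + (n + 2·MST − c(r,s))/(εΔ)` connected components,
(b) every component has total edge length at most `εΔ`,
(c) every component has at most `1 + εΔ` vertices, and
(d) the total edge length is at most `2·MST − c(r,s)`. -/
theorem tour_splitting {M : Type*} [MetricSpace M]
    (P : Finset M) (hP : P.Nonempty) (r : M) (s : M) (hsP : s ∈ P)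
    (hsmax : ∀ p ∈ P, dist r p ≤ dist r s)
    (ε Δ : ℝ) (hε : 0 < ε) (hΔ : 0 < Δ)
    (hΔMST : Δ ≤ mstOn (insert r ↑P : Set M)) :
    ∃ G : SimpleGraph ↥(↑P : Set M),
      G.IsAcyclic ∧
      (∀ v : ↥(↑P : Set M), {u | G.Adj v u}.ncard ≤ 2) ∧
      (Nat.card G.ConnectedComponent : ℝ) ≤
        1 + ((P.card : ℝ) + 2 * mstOn (insert r ↑P : Set M) - dist r s) / (ε * Δ) ∧
      (∀ C : G.ConnectedComponent,
        (∑ᶠ e ∈ {e ∈ G.edgeSet | ∀ v ∈ e, G.connectedComponentMk v = C},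
          pairDist e) ≤ ε * Δ) ∧
      (∀ C : G.ConnectedComponent,
        ({v | G.connectedComponentMk v = C}.ncard : ℝ) ≤ 1 + ε * Δ) ∧
      (∑ᶠ e ∈ G.edgeSet, pairDist e) ≤
        2 * mstOn (insert r ↑P : Set M) - dist r s :=
  tour_splitting_general P (P.finite_toSet.insert r) (Set.subset_insert _ _)
    (Set.mem_insert _ _) (Set.mem_insert_of_mem _ hsP) (mul_pos hε hΔ)
end
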